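/- arXiv:1005.4548 — 3 statements merged into one kernel-verified Lean document; each statement's English description precedes it below -/
import Mathlib

section
/- Let q = p^n, let ω be the Teichmüller character of F_q^× valued in ℚ_p(ξ) (where ξ is a primitive (q-1)-th root of unity), and let g(j) = τ(ω^{-j}) be the Gauss sum. Then for 1 ≤ j < q-1, the p-adic valuation of g(j) equals wt_p(j)/(p-1), where wt_p(j) is the sum of the base-p digits of j. -/
theorem Nat.sum_digits_eq_mod_add {b : ℕ} (hb : 1 < b) (m : ℕ) :
    (Nat.digits b m).sum = m % b + (Nat.digits b (m / b)).sum := by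
  rcases Nat.eq_zero_or_pos m with rfl | hm
  · simp
  · rw [Nat.digits_def' hb hm, List.sum_cons]

theorem Nat.sum_digits_succ_of_not_dvd {b : ℕ} (hb : 1 < b) {m : ℕ} (h : ¬ b ∣ m + 1) :
    (Nat.digits b (m + 1)).sum = (Nat.digits b m).sum + 1 := by
  have hdiv := Nat.succ_div_of_not_dvd h
  have hmod : (m + 1) % b = m % b + 1 := by
    have h1 := Nat.mod_add_div (m + 1) b
    have h2 := Nat.mod_add_div m b
    rw [hdiv] at h1
    lia
  rw [sum_digits_eq_mod_add hb, hdiv, hmod, sum_digits_eq_mod_add hb m]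
  ring

/-- In base `b`, subtracting from `b ^ n - 1` complements every digit. -/
theorem Nat.sum_digits_add_sum_digits_pow_sub {b : ℕ} (hb : 1 < b) (n j : ℕ) (hj : j < b ^ n) :
    (Nat.digits b j).sum + (Nat.digits b (b ^ n - 1 - j)).sum = n * (b - 1) := by
  induction n generalizing j with
  | zero => simp_all
  | succ n ih =>
    have hb0 : 0 < b := by lia
    have hdiv : j / b < b ^ n := Nat.div_lt_of_lt_mul (by rwa [← pow_succ'])
    have hmod := Nat.mod_lt j hb0
    have hsplit : b ^ (n + 1) - 1 - j = (b - 1 - j % b) + b * (b ^ n - 1 - j / b) := by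
      have h1 := Nat.mod_add_div j b
      have h2 : b * (b ^ n - 1 - j / b) + b * (j / b) + b = b ^ (n + 1) := by
        rw [pow_succ', ← mul_add, ← mul_add_one]
        congr 1
        lia
      lia
    have hlt : b - 1 - j % b < b := by lia
    rw [sum_digits_eq_mod_add hb j, sum_digits_eq_mod_add hb (b ^ (n + 1) - 1 - j), hsplit,
      Nat.add_mul_mod_self_left,
      Nat.mod_eq_of_lt hlt, Nat.add_mul_div_left _ _ hb0, Nat.div_eq_of_lt hlt, zero_add,
      add_one_mul, ← ih _ hdiv]
    lia

/-- The Teichmüller character of a field of characteristic `p`, transported along a ring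
homomorphism from the Witt vectors. -/
noncomputable def teichmullerMulChar (p : ℕ) [Fact p.Prime] {F K : Type*} [Field F] [CommRing K]
    (ι : WittVector p F →+* K) : MulChar F K where
  toMonoidHom := (ι : WittVector p F →* K).comp (WittVector.teichmuller p)
  map_nonunit' a ha := by
    obtain rfl : a = 0 := by simpa using ha
    simp [WittVector.teichmuller_zero]

/-- The additive character `x ↦ ζ ^ Tr(x)`. -/
noncomputable def traceAddChar (p : ℕ) [NeZero p] (F : Type*) {K : Type*} [CommRing F]
    [CommRing K] [Algebra (ZMod p) F] {ζ : K} (hζ : ζ ^ p = 1) : AddChar F K :=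
  (AddChar.zmodChar p hζ).compAddMonoidHom (Algebra.trace (ZMod p) F).toAddMonoidHom

section Characters

variable {p : ℕ} [Fact p.Prime] {F K : Type*} [Field F] [Field K]

theorem teichmullerMulChar_apply (ι : WittVector p F →+* K) (x : F) :
    teichmullerMulChar p ι x = ι (WittVector.teichmuller p x) := rfl

theorem traceAddChar_apply [Algebra (ZMod p) F] {ζ : K} (hζ : ζ ^ p = 1) (x : F) :
    traceAddChar p F hζ x = ζ ^ (Algebra.trace (ZMod p) F x).val := rfl

theorem teichmullerMulChar_injective {ι : WittVector p F →+* K} (hι : Function.Injective ι) :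
    Function.Injective (teichmullerMulChar p ι) := fun x y h ↦ by
  simpa using congr_arg (WittVector.coeff · 0) (hι h)

variable [Fintype F]

theorem teichmullerMulChar_inv_pow_ne_one {ι : WittVector p F →+* K} (hι : Function.Injective ι)
    {j : ℕ} (hj : ¬ Fintype.card F - 1 ∣ j) : (teichmullerMulChar p ι)⁻¹ ^ j ≠ 1 := by
  rw [← FiniteField.forall_pow_eq_one_iff] at hj
  contrapose! hj
  intro x
  have h := DFunLike.congr_fun hj ((x⁻¹ : Fˣ) : F)
  rw [MulChar.pow_apply_coe, MulChar.inv_apply', ← Units.val_inv_eq_inv_val, inv_inv, ← map_pow,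
    MulChar.one_apply_coe, ← map_one (teichmullerMulChar p ι)] at h
  exact Units.ext <| by simpa using teichmullerMulChar_injective hι h

theorem inv_teichmullerMulChar_inv_pow (ι : WittVector p F →+* K) {j : ℕ}
    (hj : j ≤ Fintype.card F - 1) :
    ((teichmullerMulChar p ι)⁻¹ ^ j)⁻¹ = (teichmullerMulChar p ι)⁻¹ ^ (Fintype.card F - 1 - j) := by
  rw [inv_eq_iff_mul_eq_one, ← pow_add, Nat.add_sub_cancel' hj]
  ext x
  rw [MulChar.pow_apply_coe, ← map_pow, FiniteField.pow_card_sub_one_eq_one _ x.ne_zero]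
  simp

theorem traceAddChar_isPrimitive [Algebra (ZMod p) F] {ζ : K} (hζ : IsPrimitiveRoot ζ p) :
    (traceAddChar p F hζ.pow_eq_one).IsPrimitive := by
  refine AddChar.IsPrimitive.of_ne_one fun h ↦ hζ.ne_one (Fact.out : p.Prime).one_lt ?_
  obtain ⟨x, hx⟩ := Algebra.trace_surjective (ZMod p) F 1
  simpa [traceAddChar_apply, hx, ZMod.val_one'' (Fact.out : p.Prime).ne_one]
    using DFunLike.congr_fun h x

theorem traceAddChar_pow_char [Algebra (ZMod p) F] {ζ : K} (hζ : ζ ^ p = 1) (x : F) :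
    traceAddChar p F hζ (x ^ p) = traceAddChar p F hζ x := by
  rw [traceAddChar_apply, traceAddChar_apply,
    ← Algebra.trace_eq_of_algEquiv (FiniteField.frobeniusAlgEquivOfAlgebraic (ZMod p) F) x]
  simp [ZMod.card]

/-- The Gauss sum of the `j`-th power of the inverse of the Teichmüller character. -/
noncomputable def teichmullerGaussSum [Algebra (ZMod p) F] (ι : WittVector p F →+* K) {ζ : K}
    (hζ : ζ ^ p = 1) (j : ℕ) : K :=
  gaussSum ((teichmullerMulChar p ι)⁻¹ ^ j) (traceAddChar p F hζ)

theorem teichmullerGaussSum_eq_sum_units [DecidableEq F] [Algebra (ZMod p) F]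
    (ι : WittVector p F →+* K) {ζ : K} (hζ : ζ ^ p = 1) (j : ℕ) :
    teichmullerGaussSum ι hζ j = ∑ x : Fˣ, ι (WittVector.teichmuller p ((x⁻¹ : Fˣ) : F)) ^ j
      * ζ ^ (Algebra.trace (ZMod p) F x).val := by
  refine (Fintype.sum_of_injective Units.val Units.val_injective _ _ (fun x hx ↦ ?_) fun x ↦ ?_).symm
  · rw [MulChar.map_nonunit _ hx, zero_mul]
  · rw [MulChar.pow_apply_coe, MulChar.inv_apply', traceAddChar_apply, teichmullerMulChar_apply,
      Units.val_inv_eq_inv_val]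

theorem teichmullerGaussSum_char_mul [CharP F p] [Algebra (ZMod p) F]
    (ι : WittVector p F →+* K) {ζ : K} (hζ : ζ ^ p = 1) {j : ℕ} (hj : j ≠ 0) :
    teichmullerGaussSum ι hζ (p * j) = teichmullerGaussSum ι hζ j := by
  refine Fintype.sum_bijective (frobenius F p) (bijective_frobenius F p) _ _ fun x ↦ ?_
  have hp0 : p ≠ 0 := (Fact.out : p.Prime).ne_zero
  rw [frobenius_def, traceAddChar_pow_char, MulChar.pow_apply' _ (mul_ne_zero hp0 hj),
    MulChar.pow_apply' _ hj, pow_mul, map_pow]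

/-- The sum of `x⁻¹ Tr(x)` over the units of a finite field with more than two elements is `-1`. -/
theorem sum_inv_mul_trace [DecidableEq F] [Algebra (ZMod p) F] (hF : 2 < Fintype.card F) :
    ∑ x : Fˣ, ((x⁻¹ : Fˣ) : F) * algebraMap (ZMod p) F (Algebra.trace (ZMod p) F x) = -1 := by
  have hp1 : 1 < p := (Fact.out : p.Prime).one_lt
  have hcard : Fintype.card F = p ^ Module.finrank (ZMod p) F := by
    simpa [ZMod.card] using Module.card_eq_pow_finrank (K := ZMod p) (V := F)
  have hterm (i : ℕ) (x : Fˣ) : ((x⁻¹ : Fˣ) : F) * (x : F) ^ p ^ i = (x : F) ^ (p ^ i - 1) := by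
    rw [← mul_pow_sub_one (pow_pos (by lia) i).ne' (x : F), ← mul_assoc, Units.inv_mul, one_mul]
  simp_rw [FiniteField.algebraMap_trace_eq_sum_pow, Nat.card_zmod, Finset.mul_sum, hterm]
  rw [Finset.sum_comm]
  simp_rw [FiniteField.sum_pow_units]
  rw [Finset.sum_eq_single_of_mem 0 (by simp [Module.finrank_pos]), if_pos (by simp)]
  intro i hi hi0
  refine if_neg fun h ↦ ?_
  have h1 : p ^ i < Fintype.card F := by
    rw [hcard]; exact Nat.pow_lt_pow_right hp1 (Finset.mem_range.mp hi)
  have h2 : 1 < p ^ i := Nat.one_lt_pow hi0 hp1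
  have := Nat.le_of_dvd (by lia) h
  lia

end Characters

section Valuation

variable {K Γ : Type*} [Field K] [LinearOrderedCommGroupWithZero Γ] {v : Valuation K Γ}

theorem Valuation.map_pow_sub_one_sub_mul_le {x : K} (hx : v (x - 1) ≤ 1) (k : ℕ) :
    v (x ^ k - 1 - k * (x - 1)) ≤ v (x - 1) ^ 2 := by
  have hint (m : ℕ) : v (m : K) ≤ 1 := by
    exact natCast_mem v.integer m
  have hx1 : v x ≤ 1 := by
    simpa using v.map_add_le hx (v.map_one.le)
  induction k with
  | zero => simp
  | succ k ih =>
    have : x ^ (k + 1) - 1 - ((k + 1 : ℕ) : K) * (x - 1) =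
        x * (x ^ k - 1 - k * (x - 1)) + k * (x - 1) ^ 2 := by push_cast; ring
    rw [this]
    refine v.map_add_le ?_ ?_
    · rw [map_mul]; exact mul_le_of_le_one_of_le hx1 ih
    · rw [map_mul, map_pow]; exact mul_le_of_le_one_left' (hint k)

variable {p : ℕ} [Fact p.Prime] {F : Type*} [Field F] [Fintype F] [Algebra (ZMod p) F]
  {ι : WittVector p F →+* K} {ζ : K}

theorem valuation_map_eq_one_of_isUnit {R : Type*} [CommRing R] {f : R →+* K}
    (hf : ∀ x, v (f x) ≤ 1) {x : R} (hx : IsUnit x) : v (f x) = 1 := by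
  obtain ⟨y, hy⟩ := hx.exists_right_inv
  refine (hf x).antisymm ?_
  rw [← v.map_one, ← f.map_one, ← hy, map_mul, map_mul]
  exact mul_le_of_le_one_right' (hf y)

theorem valuation_teichmullerGaussSum_one [CharP F p] (hι : Function.Injective ι)
    (hιint : ∀ x, v (ι x) ≤ 1) (hζ : ζ ^ p = 1) (hne : ζ ≠ 1) (hlt : v (ζ - 1) < 1)
    (hF : 2 < Fintype.card F) :
    v (teichmullerGaussSum ι hζ 1) = v (ζ - 1) := by
  classical
  set t : Fˣ → WittVector p F := fun x ↦ WittVector.teichmuller p ((x⁻¹ : Fˣ) : F)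
  set k : Fˣ → ℕ := fun x ↦ (Algebra.trace (ZMod p) F x).val with hk
  have hpos : 0 < v (ζ - 1) := zero_lt_iff.mpr (v.ne_zero_iff.mpr (sub_ne_zero.mpr hne))
  have hsum : ∑ x : Fˣ, ι (t x) = 0 := by
    rw [← MulChar.sum_eq_zero_of_ne_one (χ := (teichmullerMulChar p ι)⁻¹) <| by
      simpa using teichmullerMulChar_inv_pow_ne_one hι
        (Nat.not_dvd_of_pos_of_lt one_pos (by lia : 1 < Fintype.card F - 1))]
    refine Fintype.sum_of_injective Units.val Units.val_injective _ _ (fun x hx ↦ ?_) fun x ↦ ?_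
    · exact MulChar.map_nonunit _ hx
    · rw [MulChar.inv_apply', teichmullerMulChar_apply, ← Units.val_inv_eq_inv_val]
  have hunit : IsUnit (∑ x : Fˣ, t x * (k x : WittVector p F)) := by
    refine WittVector.isUnit_of_coeff_zero_ne_zero _ ?_
    change WittVector.constantCoeff _ ≠ 0
    have h := sum_inv_mul_trace (p := p) hF
    have hcoeff : WittVector.constantCoeff (∑ x : Fˣ, t x * (k x : WittVector p F)) = -1 := by
      rw [← h, map_sum]
      refine Finset.sum_congr rfl fun x _ ↦ ?_
      rw [map_mul, map_natCast, hk, ← map_natCast (algebraMap (ZMod p) F), ZMod.natCast_zmod_val]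
      rfl
    rw [hcoeff]
    exact neg_ne_zero.mpr one_ne_zero
  have hsplit : teichmullerGaussSum ι hζ 1 =
      (ζ - 1) * ι (∑ x : Fˣ, t x * (k x : WittVector p F)) +
        ∑ x : Fˣ, ι (t x) * (ζ ^ k x - 1 - k x * (ζ - 1)) := by
    rw [teichmullerGaussSum_eq_sum_units, ← sub_zero (∑ x : Fˣ, _ * _), ← hsum,
      ← Finset.sum_sub_distrib, map_sum, Finset.mul_sum, ← Finset.sum_add_distrib]
    refine Finset.sum_congr rfl fun x _ ↦ ?_
    rw [map_mul, map_natCast]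
    ring
  have hmain : v ((ζ - 1) * ι (∑ x : Fˣ, t x * (k x : WittVector p F))) = v (ζ - 1) := by
    rw [map_mul, valuation_map_eq_one_of_isUnit hιint hunit, mul_one]
  rw [hsplit, Valuation.map_add_eq_of_lt_left, hmain]
  rw [hmain]
  refine lt_of_le_of_lt (b := v (ζ - 1) ^ 2) (v.map_sum_le fun x _ ↦ ?_) ?_
  · rw [map_mul]
    exact mul_le_of_le_one_of_le (hιint _) (Valuation.map_pow_sub_one_sub_mul_le hlt.le _)
  · rw [sq]
    exact mul_lt_of_lt_one_left hpos hlt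

theorem valuation_teichmullerGaussSum_mul_le (hι : Function.Injective ι)
    (hιint : ∀ x, v (ι x) ≤ 1) (hζ : ζ ^ p = 1) {a b : ℕ}
    (h : ¬ Fintype.card F - 1 ∣ a + b) :
    v (teichmullerGaussSum ι hζ a) * v (teichmullerGaussSum ι hζ b) ≤
      v (teichmullerGaussSum ι hζ (a + b)) := by
  have hint (j : ℕ) (x : F) : v (((teichmullerMulChar p ι)⁻¹ ^ j) x) ≤ 1 := by
    by_cases hx : IsUnit x
    · lift x to Fˣ using hx
      rw [MulChar.pow_apply_coe, MulChar.inv_apply', teichmullerMulChar_apply, map_pow]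
      exact pow_le_one' (hιint _) j
    · rw [MulChar.map_nonunit _ hx, map_zero]
      exact zero_le_one
  have hne := teichmullerMulChar_inv_pow_ne_one hι h
  rw [pow_add] at hne
  rw [← map_mul, teichmullerGaussSum, teichmullerGaussSum, ← jacobiSum_mul_nontrivial hne,
    ← pow_add, map_mul]
  refine mul_le_of_le_one_right' (v.map_sum_le fun x _ ↦ ?_)
  rw [map_mul]
  exact mul_le_one' (hint _ _) (hint _ _)

theorem pow_sum_digits_le_valuation_teichmullerGaussSum [CharP F p] (hι : Function.Injective ι)
    (hιint : ∀ x, v (ι x) ≤ 1) (hζ : ζ ^ p = 1) (hne : ζ ≠ 1) (hlt : v (ζ - 1) < 1)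
    {j : ℕ} (hj1 : 1 ≤ j) (hj2 : j < Fintype.card F - 1) :
    v (ζ - 1) ^ (Nat.digits p j).sum ≤ v (teichmullerGaussSum (F := F) ι hζ j) := by
  have hp : 1 < p := (Fact.out : p.Prime).one_lt
  have hone := valuation_teichmullerGaussSum_one hι hιint hζ hne hlt (by lia)
  induction j using Nat.strong_induction_on with
  | _ j ih =>
    by_cases hdvd : p ∣ j
    · obtain ⟨m, rfl⟩ := hdvd
      have hm : 0 < m := Nat.pos_of_mul_pos_left hj1
      have hlt : m < p * m := lt_mul_of_one_lt_left hm hp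
      rw [Nat.digits_base_mul hp hm, List.sum_cons, zero_add,
        teichmullerGaussSum_char_mul ι hζ hm.ne']
      exact ih m hlt hm (by lia)
    · obtain ⟨m, rfl⟩ := Nat.exists_eq_add_of_le' hj1
      have hdig : (Nat.digits p (m + 1)).sum = (Nat.digits p m).sum + 1 :=
        Nat.sum_digits_succ_of_not_dvd hp hdvd
      rcases Nat.eq_zero_or_pos m with rfl | hm
      · simpa [Nat.digits_of_lt p 1 one_ne_zero hp] using hone.ge
      · rw [hdig, pow_succ]
        refine le_trans ?_ (valuation_teichmullerGaussSum_mul_le hι hιint hζ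
          (Nat.not_dvd_of_pos_of_lt hj1 hj2))
        exact mul_le_mul' (ih m (by lia) hm (by lia)) hone.ge

/-- The reflection formula for Gauss sums, on the level of valuations. -/
theorem valuation_teichmullerGaussSum_mul_reflect (hι : Function.Injective ι)
    (hιint : ∀ x, v (ι x) ≤ 1) (hζ : IsPrimitiveRoot ζ p)
    {j : ℕ} (hj1 : 1 ≤ j) (hj2 : j < Fintype.card F - 1) :
    v (teichmullerGaussSum (F := F) ι hζ.pow_eq_one j) *
      v (teichmullerGaussSum (F := F) ι hζ.pow_eq_one (Fintype.card F - 1 - j)) =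
        v (Fintype.card F : K) := by
  have hval : v (((teichmullerMulChar p ι)⁻¹ ^ (Fintype.card F - 1 - j)) (-1)) = 1 := by
    rw [MulChar.pow_apply' _ (by lia), MulChar.inv_apply', teichmullerMulChar_apply, map_pow,
      valuation_map_eq_one_of_isUnit hιint, one_pow]
    exact IsUnit.map _ (by simp)
  have hχ := teichmullerMulChar_inv_pow_ne_one hι (Nat.not_dvd_of_pos_of_lt hj1 hj2)
  rw [← gaussSum_mul_gaussSum_eq_card hχ (traceAddChar_isPrimitive hζ),
    inv_teichmullerMulChar_inv_pow ι hj2.le, teichmullerGaussSum, teichmullerGaussSum,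
    ← mul_gaussSum_inv_eq_gaussSum ((teichmullerMulChar p ι)⁻¹ ^ (Fintype.card F - 1 - j)),
    map_mul, map_mul, hval, one_mul]

end Valuation

/-- The `p`-adic valuation of the Gauss sum `g(j) = τ(ω^{-j})` equals
`wt_p(j)/(p-1)`. The Teichmüller character `ω` is realized via an embedding `ι` of
the Witt vectors `𝕎(F_q)` into `K = ℚ_p(ξ,ζ)`, and the normalized valuation
identity `ν_p(g(j)) = wt_p(j)/(p-1)` is expressed (clearing denominators, using
`ν_p(p) = 1`) as `v(g(j))^{p-1} = v(p)^{wt_p(j)}` for the multiplicative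
`p`-adic valuation `v` on `K` (which satisfies `v(p) < 1`, `v(p) ≠ 0` and the
ramification identity `v(ζ-1)^{p-1} = v(p)`). -/
theorem gauss_sum_valuation (p : ℕ) [Fact p.Prime] (n : ℕ) (hn : 1 ≤ n)
    (F : Type*) [Field F] [Fintype F] [DecidableEq F] [CharP F p] [Algebra (ZMod p) F]
    (hcard : Fintype.card F = p ^ n)
    (K : Type*) [Field K] (Γ : Type*) [LinearOrderedCommGroupWithZero Γ]
    (v : Valuation K Γ)
    (hvp0 : v (p : K) ≠ 0) (hvp1 : v (p : K) < 1)
    (ι : WittVector p F →+* K) (hι : Function.Injective ι)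
    (hιint : ∀ x : WittVector p F, v (ι x) ≤ 1)
    (ζ : K) (hζ : IsPrimitiveRoot ζ p)
    (hram : v (ζ - 1) ^ (p - 1) = v (p : K))
    (j : ℕ) (hj1 : 1 ≤ j) (hj2 : j < p ^ n - 1) :
    v (- ∑ x : Fˣ, ι (WittVector.teichmuller p ((x⁻¹ : Fˣ) : F)) ^ j
          * ζ ^ (Algebra.trace (ZMod p) F x).val) ^ (p - 1)
      = v (p : K) ^ ((Nat.digits p j).sum) := by
  have hp : 1 < p := (Fact.out : p.Prime).one_lt
  have hne : ζ ≠ 1 := hζ.ne_one hp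
  have hpos : 0 < v (ζ - 1) := zero_lt_iff.mpr (v.ne_zero_iff.mpr (sub_ne_zero.mpr hne))
  have hlt : v (ζ - 1) < 1 := by
    contrapose! hvp1
    rw [← hram]
    exact one_le_pow_of_one_le' hvp1 _
  rw [← teichmullerGaussSum_eq_sum_units ι hζ.pow_eq_one, Valuation.map_neg, ← hram, pow_right_comm]
  congr 1
  rw [← hcard] at hj2
  have hlow := pow_sum_digits_le_valuation_teichmullerGaussSum hι hιint hζ.pow_eq_one hne hlt hj1 hj2
  have hlow' := pow_sum_digits_le_valuation_teichmullerGaussSum hι hιint hζ.pow_eq_one hne hlt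
    (j := Fintype.card F - 1 - j) (by lia) (by lia)
  refine le_antisymm ?_ hlow
  refine le_of_mul_le_mul_right ?_ (pow_pos hpos (Nat.digits p (Fintype.card F - 1 - j)).sum)
  refine (mul_le_mul_right hlow' _).trans ?_
  rw [valuation_teichmullerGaussSum_mul_reflect hι hιint hζ hj1 hj2, ← pow_add, hcard,
    Nat.sum_digits_add_sum_digits_pow_sub hp n j (by lia), Nat.cast_pow, map_pow, ← hram, ← pow_mul,
    mul_comm]
end

section
/- Stickelberger's congruence: with q = p^n and π the unique (p-1)-th root of -p in ℚ_p(ξ,ζ) satisfying π ≡ ζ - 1 (mod π²), for 1 ≤ j < q-1 with base-p digits j = j_0 + j_1 p + ... + j_{n-1} p^{n-1}, the Gauss sum g(j) = τ(ω^{-j}) satisfies g(j) ≡ π^{wt_p(j)} / (j_0! ⋯ j_{n-1}!) (mod π^{wt_p(j)+1}). -/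
section

open Finset

namespace WittVector

/-- The inverse of the Teichmüller character, with values in the Witt vectors. -/
noncomputable def invTeichmullerChar (p : ℕ) [Fact p.Prime] (F : Type*) [Field F] :
    MulChar F (WittVector p F) where
  toMonoidHom := (teichmuller p).comp invMonoidHom
  map_nonunit' a ha := by
    obtain rfl : a = 0 := by simpa using ha
    simp [teichmuller_zero]

variable {p : ℕ} [Fact p.Prime] {F : Type*} [Field F]

lemma invTeichmullerChar_apply (x : F) : invTeichmullerChar p F x = teichmuller p x⁻¹ := rfl

lemma constantCoeff_teichmuller (x : F) : constantCoeff (teichmuller p x) = x :=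
  teichmuller_coeff_zero p x

lemma invTeichmullerChar_pow_ne_one [Fintype F] {k : ℕ} (hk0 : k ≠ 0)
    (hk : k < Fintype.card F - 1) : invTeichmullerChar p F ^ k ≠ 1 := by
  intro h
  have hdvd := (FiniteField.forall_pow_eq_one_iff F k).1 fun x ↦ by
    have hx := congrArg constantCoeff (MulChar.eq_one_iff.1 h x⁻¹)
    rw [MulChar.pow_apply_coe, invTeichmullerChar_apply, map_pow, constantCoeff_teichmuller] at hx
    ext
    simpa using hx
  exact absurd (Nat.le_of_dvd (Nat.pos_of_ne_zero hk0) hdvd) (by omega)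

lemma natCast_dvd_of_constantCoeff_eq_zero [Finite F] [CharP F p] {a : WittVector p F}
    (ha : constantCoeff a = 0) : (p : WittVector p F) ∣ a := by
  rw [← Ideal.mem_span_singleton, ← ker_constantCoeff]
  exact ha

end WittVector

namespace FiniteField

variable {F : Type*} [Field F] [Fintype F]

lemma sum_inv_eq_zero (hF : 2 < Fintype.card F) : ∑ x : F, x⁻¹ = 0 := by
  refine (Equiv.sum_comp (Equiv.inv F) fun x ↦ x).trans ?_
  simpa using sum_pow_lt_card_sub_one F 1 (by omega)

lemma sum_inv_mul_one_sub_pow (hF : 2 < Fintype.card F) {m : ℕ} (hm : m ≤ Fintype.card F - 1) :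
    ∑ x : F, x⁻¹ * (1 - x) ^ m = m := by
  classical
  have key (x : F) : x⁻¹ * (1 - x) ^ m =
      x⁻¹ - ∑ i ∈ range m, (1 - x) ^ i + if x = 0 then (m : F) else 0 := by
    rcases eq_or_ne x 0 with rfl | hx
    · simp
    · have h := geom_sum_mul (1 - x) m
      rw [if_neg hx]
      field_simp
      linear_combination -h
  have hpow (i : ℕ) (hi : i ∈ range m) : ∑ x : F, (1 - x) ^ i = 0 := by
    refine (Equiv.sum_comp (Equiv.subLeft (1 : F)) fun x ↦ x ^ i).trans ?_
    exact sum_pow_lt_card_sub_one F i (by have := mem_range.1 hi; omega)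
  simp_rw [key]
  rw [sum_add_distrib, sum_sub_distrib, sum_inv_eq_zero hF, sum_comm, sum_eq_zero hpow]
  simp

lemma sum_inv_mul_trace (p : ℕ) [Fact p.Prime] [Algebra (ZMod p) F]
    (hF : 2 < Fintype.card F) :
    ∑ x : F, x⁻¹ * algebraMap (ZMod p) F (Algebra.trace (ZMod p) F x) = -1 := by
  classical
  have hcard := Module.card_eq_pow_finrank (K := ZMod p) (V := F)
  rw [ZMod.card] at hcard
  have hp := (Fact.out : p.Prime).one_lt
  obtain ⟨n, hn⟩ : ∃ n, Module.finrank (ZMod p) F = n + 1 :=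
    Nat.exists_eq_succ_of_ne_zero (by rintro h; rw [h, pow_zero] at hcard; omega)
  simp_rw [algebraMap_trace_eq_sum_pow, Nat.card_zmod, hn, sum_range_succ', mul_add, mul_sum]
  rw [sum_add_distrib, sum_comm, sum_eq_zero, zero_add]
  · have (x : F) : x⁻¹ * x ^ p ^ 0 = 1 - if x = 0 then 1 else 0 := by
      rcases eq_or_ne x 0 with rfl | hx <;> simp [*]
    simp_rw [this, sum_sub_distrib]
    simp
  · intro i hi
    have h1 : 1 < p ^ (i + 1) := Nat.one_lt_pow (by omega) hp
    have (x : F) : x⁻¹ * x ^ p ^ (i + 1) = x ^ (p ^ (i + 1) - 1) := by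
      rcases eq_or_ne x 0 with rfl | hx
      · rw [zero_pow (by omega), zero_pow (by omega), mul_zero]
      · rw [inv_mul_eq_iff_eq_mul₀ hx, ← pow_succ', Nat.sub_add_cancel h1.le]
    simp_rw [this]
    refine sum_pow_lt_card_sub_one F _ ?_
    have : p ^ (i + 1) < p ^ (n + 1) :=
      Nat.pow_lt_pow_right hp (by have := mem_range.1 hi; omega)
    rw [hcard, hn]
    omega

end FiniteField

namespace WittVector

variable {p : ℕ} [Fact p.Prime] {F : Type*} [Field F] [Fintype F]

lemma constantCoeff_jacobiSum_invTeichmullerChar {k : ℕ} (hk : k + 1 < Fintype.card F - 1) :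
    constantCoeff (jacobiSum (invTeichmullerChar p F) (invTeichmullerChar p F ^ k)) =
      -((k + 1 : ℕ) : F) := by
  have key (y : F) : constantCoeff ((invTeichmullerChar p F ^ k) y) =
      y ^ (Fintype.card F - 1 - k) := by
    rcases eq_or_ne y 0 with rfl | hy
    · rw [MulChar.map_zero, map_zero, zero_pow (by omega)]
    · have h := MulChar.pow_apply_coe (invTeichmullerChar p F) k (Units.mk0 y hy)
      rw [Units.val_mk0] at h
      rw [h, invTeichmullerChar_apply, map_pow, constantCoeff_teichmuller, inv_pow,
        eq_comm, ← mul_eq_one_iff_eq_inv₀ (pow_ne_zero _ hy), ← pow_add, Nat.sub_add_cancel (by omega),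
        FiniteField.pow_card_sub_one_eq_one y hy]
  simp_rw [jacobiSum, map_sum, map_mul, key, invTeichmullerChar_apply, constantCoeff_teichmuller]
  rw [FiniteField.sum_inv_mul_one_sub_pow (by omega) (by omega)]
  have : ((Fintype.card F - 1 - k + (k + 1) : ℕ) : F) = 0 := by
    rw [show Fintype.card F - 1 - k + (k + 1) = Fintype.card F by omega, Nat.cast_card_eq_zero]
  rw [Nat.cast_add] at this
  exact eq_neg_of_add_eq_zero_left this

end WittVector

namespace AddChar

/-- The additive character `x ↦ ζ ^ Tr x`. -/
noncomputable def ofTrace (p : ℕ) [Fact p.Prime] (F : Type*) [Field F] [Algebra (ZMod p) F]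
    {R : Type*} [CommRing R] {ζ : R} (hζ : ζ ^ p = 1) : AddChar F R :=
  (zmodChar p hζ).compAddMonoidHom (Algebra.trace (ZMod p) F).toAddMonoidHom

variable {p : ℕ} [Fact p.Prime] {F : Type*} [Field F] [Algebra (ZMod p) F]
  {R : Type*} [CommRing R] {ζ : R}

lemma ofTrace_apply (hζ : ζ ^ p = 1) (x : F) :
    ofTrace p F hζ x = ζ ^ (Algebra.trace (ZMod p) F x).val := rfl

lemma ofTrace_ne_one [Finite F] (hζ : ζ ^ p = 1) (h1 : ζ ≠ 1) : ofTrace p F hζ ≠ 1 := by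
  obtain ⟨x, hx⟩ := Algebra.trace_surjective (ZMod p) F 1
  refine fun h ↦ h1 ?_
  have : Fact (1 < p) := ⟨(Fact.out : p.Prime).one_lt⟩
  have hx1 := DFunLike.congr_fun h x
  rwa [ofTrace_apply, hx, ZMod.val_one, pow_one, one_apply] at hx1

lemma ofTrace_pow_char [Finite F] (hζ : ζ ^ p = 1) (x : F) :
    ofTrace p F hζ (x ^ p) = ofTrace p F hζ x := by
  have h := Algebra.trace_eq_of_algEquiv
    (FiniteField.frobeniusAlgEquivOfAlgebraic (ZMod p) F) x
  rw [FiniteField.coe_frobeniusAlgEquivOfAlgebraic] at h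
  simp only [ZMod.card] at h
  rw [ofTrace_apply, ofTrace_apply, h]

end AddChar

lemma gaussSum_pow_char_ofTrace {p : ℕ} [Fact p.Prime] {F : Type*} [Field F] [Fintype F]
    [Algebra (ZMod p) F] {R : Type*} [CommRing R] {ζ : R} (hζ : ζ ^ p = 1) (χ : MulChar F R) :
    gaussSum (χ ^ p) (AddChar.ofTrace p F hζ) = gaussSum χ (AddChar.ofTrace p F hζ) := by
  have hb : Function.Bijective fun x : F ↦ x ^ p := by
    have := (FiniteField.frobeniusAlgEquivOfAlgebraic (ZMod p) F).bijective
    rwa [FiniteField.coe_frobeniusAlgEquivOfAlgebraic, ZMod.card] at this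
  refine Eq.trans ?_ (hb.sum_comp fun x ↦ χ x * AddChar.ofTrace p F hζ x)
  refine sum_congr rfl fun x _ ↦ ?_
  rw [AddChar.ofTrace_pow_char, MulChar.pow_apply' _ (Fact.out : p.Prime).ne_zero, map_pow]

section Congruence

open WittVector

variable {p : ℕ} [Fact p.Prime] {F : Type*} [Field F] [Fintype F] [CharP F p]
  {R : Type*} [CommRing R] {ζ π : R}

lemma sq_dvd_pow_sub_one_sub_mul (ζ : R) (a : ℕ) : (ζ - 1) ^ 2 ∣ ζ ^ a - 1 - a * (ζ - 1) := by
  induction a with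
  | zero => simp
  | succ a ih =>
    obtain ⟨c, hc⟩ := ih
    refine ⟨ζ * c + a, ?_⟩
    push_cast
    linear_combination ζ * hc

lemma dvd_natCast_of_pow_eq_neg (hπ : π ^ (p - 1) = -(p : R)) : π ∣ (p : R) := by
  rw [← dvd_neg, ← hπ]
  exact dvd_pow_self _ (Nat.sub_ne_zero_of_lt (Fact.out : p.Prime).one_lt)

lemma dvd_map_of_constantCoeff_eq_zero (ι : WittVector p F →+* R)
    (hπ : π ^ (p - 1) = -(p : R)) {a : WittVector p F} (ha : constantCoeff a = 0) : π ∣ ι a :=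
  (dvd_natCast_of_pow_eq_neg hπ).trans <| by
    simpa using map_dvd ι (natCast_dvd_of_constantCoeff_eq_zero ha)

variable [Algebra (ZMod p) F]

lemma sq_dvd_neg_gaussSum_sub (hF : 2 < Fintype.card F) (ι : WittVector p F →+* R)
    (hζ : ζ ^ p = 1) (hπ : π ^ (p - 1) = -(p : R)) (hπζ : π ^ 2 ∣ π - (ζ - 1)) :
    π ^ 2 ∣ -gaussSum ((invTeichmullerChar p F).ringHomComp ι) (AddChar.ofTrace p F hζ) - π := by
  set T := invTeichmullerChar p F
  set t : F → ℕ := fun x ↦ (Algebra.trace (ZMod p) F x).val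
  have hπl : π ∣ ζ - 1 := by
    simpa using dvd_sub (dvd_refl π) ((dvd_pow_self π two_ne_zero).trans hπζ)
  have hS : ∑ x, T x = 0 := MulChar.sum_eq_zero_of_ne_one <| by
    simpa using invTeichmullerChar_pow_ne_one (p := p) (F := F) one_ne_zero (by omega)
  have hU : constantCoeff (∑ x, T x * (t x : WittVector p F) + 1) = 0 := by
    rw [map_add, map_sum, map_one, ← eq_neg_iff_add_eq_zero,
      ← FiniteField.sum_inv_mul_trace p hF]
    refine sum_congr rfl fun x _ ↦ ?_
    rw [map_mul, map_natCast, invTeichmullerChar_apply, constantCoeff_teichmuller,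
      ← map_natCast (algebraMap (ZMod p) F), ZMod.natCast_rightInverse]
  have hsum : gaussSum (T.ringHomComp ι) (AddChar.ofTrace p F hζ) + (ζ - 1) =
      ∑ x, ι (T x) * (ζ ^ t x - 1 - t x * (ζ - 1)) + ι (∑ x, T x) +
        ι (∑ x, T x * (t x : WittVector p F) + 1) * (ζ - 1) := by
    simp only [gaussSum, MulChar.ringHomComp_apply, AddChar.ofTrace_apply, map_sum, map_add,
      map_mul, map_natCast, map_one, add_mul, sum_mul, one_mul, ← add_assoc, ← sum_add_distrib]
    congr 1
    refine sum_congr rfl fun x _ ↦ ?_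
    ring
  have h : π ^ 2 ∣ gaussSum (T.ringHomComp ι) (AddChar.ofTrace p F hζ) + (ζ - 1) := by
    rw [hsum, hS, map_zero, add_zero]
    refine dvd_add (dvd_sum fun x _ ↦ Dvd.dvd.mul_left ?_ _) ?_
    · exact (pow_dvd_pow_of_dvd hπl 2).trans (sq_dvd_pow_sub_one_sub_mul ζ _)
    · rw [sq]
      exact mul_dvd_mul (dvd_map_of_constantCoeff_eq_zero ι hπ hU) hπl
  convert (dvd_add h hπζ).neg_right using 1
  ring

/-- If `u * g ≡ π ^ w * b` modulo `π ^ (w + 1)` and `u` is congruent to an integer `d` that is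
invertible modulo `π`, then `d * g ≡ π ^ w * b`. -/
lemma pow_succ_dvd_of_mul_sub {u d m g b : R} {w : ℕ} (hm : π ∣ m * d - 1) (hu : π ∣ u - d)
    (h : π ^ (w + 1) ∣ u * g - π ^ w * b) : π ^ (w + 1) ∣ d * g - π ^ w * b := by
  have hg (i : ℕ) (hi : i ≤ w) : π ^ i ∣ g := by
    induction i with
    | zero => simp
    | succ i ih =>
      have h1 : π ^ (i + 1) ∣ u * g - π ^ w * b := (pow_dvd_pow π (by omega)).trans h
      have h2 : π ^ (i + 1) ∣ π ^ w * b := (pow_dvd_pow π hi).mul_right b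
      have h3 : π ^ (i + 1) ∣ (u - d) * g := by
        rw [pow_succ']; exact mul_dvd_mul hu (ih (by omega))
      have h4 : π ^ (i + 1) ∣ (m * d - 1) * g := by
        rw [pow_succ']; exact mul_dvd_mul hm (ih (by omega))
      have := dvd_sub (((h1.add h2).sub h3).mul_left m) h4
      convert this using 1
      ring
  have h3 : π ^ (w + 1) ∣ (u - d) * g := by
    rw [pow_succ']; exact mul_dvd_mul hu (hg w le_rfl)
  convert dvd_sub h h3 using 1
  ring

/-- Stickelberger's congruence in a domain with a given `(p - 1)`-st root of `-p`. -/
theorem pow_succ_dvd_factorial_mul_gaussSum_sub [IsDomain R] (hF : 2 < Fintype.card F)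
    (ι : WittVector p F →+* R) (hι : Function.Injective ι) (hζ : ζ ^ p = 1) (hζ1 : ζ ≠ 1)
    (hπ : π ^ (p - 1) = -(p : R)) (hπζ : π ^ 2 ∣ π - (ζ - 1)) (k : ℕ)
    (hk : k < Fintype.card F - 1) :
    π ^ ((p.digits k).sum + 1) ∣ (((p.digits k).map Nat.factorial).prod : R) *
      -gaussSum ((invTeichmullerChar p F ^ k).ringHomComp ι) (AddChar.ofTrace p F hζ) -
        π ^ (p.digits k).sum := by
  have hp := (Fact.out : p.Prime).one_lt
  induction k using Nat.strong_induction_on with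
  | _ k ih =>
  rcases Nat.eq_zero_or_pos k with rfl | hk0
  · rw [pow_zero, MulChar.ringHomComp_one, gaussSum_one_left (AddChar.ofTrace_ne_one hζ hζ1)]
    simp
  have hdig := Nat.digits_def' hp hk0
  rcases Nat.eq_zero_or_pos (k % p) with h0 | h0
  · obtain ⟨l, rfl⟩ := Nat.dvd_of_mod_eq_zero h0
    have hl : l < p * l := lt_mul_of_one_lt_left (Nat.pos_of_mul_pos_left hk0) hp
    have h := ih l hl (hl.trans hk)
    rw [hdig, h0, Nat.mul_div_cancel_left l (by omega), mul_comm p l, pow_mul,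
      ← MulChar.ringHomComp_pow, gaussSum_pow_char_ofTrace]
    simpa using h
  · obtain ⟨l, rfl⟩ : ∃ l, k = l + 1 := ⟨k - 1, by omega⟩
    set d := l % p with hd
    have hdp : d + 1 < p ∧ (l + 1) % p = d + 1 ∧ (l + 1) / p = l / p := by
      have h1 := Nat.div_add_mod l p
      have h2 : d < p := Nat.mod_lt l (by omega)
      have h3 : d + 1 < p := by
        by_contra hcon
        have : l + 1 = p * (l / p + 1) := by rw [mul_add]; omega
        rw [this, Nat.mul_mod_right] at h0
        omega
      have h4 : l + 1 = (d + 1) + p * (l / p) := by omega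
      refine ⟨h3, ?_, ?_⟩
      · rw [h4, Nat.add_mul_mod_self_left, Nat.mod_eq_of_lt h3]
      · nth_rw 1 [h4]
        rw [Nat.add_mul_div_left _ _ (by omega), Nat.div_eq_of_lt h3, zero_add]
    obtain ⟨hdp, hmod, hdiv⟩ := hdp
    have hsum : (p.digits (l + 1)).sum = (p.digits l).sum + 1 ∧
        ((p.digits (l + 1)).map Nat.factorial).prod =
          (d + 1) * ((p.digits l).map Nat.factorial).prod := by
      rw [hdig, hmod, hdiv]
      rcases Nat.eq_zero_or_pos l with rfl | hl
      · simp [hd]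
      · rw [Nat.digits_def' hp hl, ← hd]
        simp [Nat.factorial_succ]
        constructor <;> ring
    rw [hsum.1, hsum.2]
    set w := (p.digits l).sum
    set P := ((p.digits l).map Nat.factorial).prod
    set ψ := AddChar.ofTrace p F hζ
    set T := invTeichmullerChar p F
    obtain ⟨a, ha⟩ := ih l (by omega) (by omega)
    obtain ⟨b, hb⟩ := sq_dvd_neg_gaussSum_sub hF ι hζ hπ hπζ
    have hne : T.ringHomComp ι * (T ^ l).ringHomComp ι ≠ 1 := by
      rw [← MulChar.ringHomComp_mul, ← pow_succ', MulChar.ringHomComp_ne_one_iff hι]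
      exact invTeichmullerChar_pow_ne_one (by omega) hk
    have hJ := jacobiSum_mul_nontrivial hne ψ
    rw [← MulChar.ringHomComp_mul, ← pow_succ', jacobiSum_ringHomComp] at hJ
    have hcop : IsCoprime ((d + 1 : ℕ) : ℤ) (p : ℤ) := by
      rw [Nat.isCoprime_iff_coprime, Nat.coprime_comm]
      exact Nat.coprime_of_lt_prime (by omega) hdp Fact.out
    obtain ⟨m, e, hme⟩ := hcop
    replace hme : (m : R) * ((d + 1 : ℕ) : R) + e * p = 1 := by
      simpa using congrArg (Int.cast : ℤ → R) hme
    have hu : π ∣ -ι (jacobiSum T (T ^ l)) - ((d + 1 : ℕ) : R) := by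
      rw [← dvd_neg]
      have : constantCoeff (jacobiSum T (T ^ l) + ((d + 1 : ℕ) : WittVector p F)) = 0 := by
        rw [map_add, constantCoeff_jacobiSum_invTeichmullerChar hk, map_natCast,
          ← hmod, neg_add_eq_zero, CharP.cast_eq_iff_mod_eq F p]
        simp
      convert dvd_map_of_constantCoeff_eq_zero ι hπ this using 1
      rw [map_add, map_natCast]
      ring
    have hmd : π ∣ (m : R) * ((d + 1 : ℕ) : R) - 1 := by
      rw [← hme, sub_add_cancel_left, dvd_neg]
      exact (dvd_natCast_of_pow_eq_neg hπ).mul_left _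
    have key := pow_succ_dvd_of_mul_sub (w := w + 1) (b := 1)
      (g := P * -gaussSum ((T ^ (l + 1)).ringHomComp ι) ψ) hmd hu ?_
    · convert key using 1
      push_cast
      ring
    · refine ⟨a + b + π * a * b, ?_⟩
      linear_combination (P : R) * hJ + (-gaussSum (T.ringHomComp ι) ψ) * ha +
        (π ^ w + π ^ (w + 1) * a) * hb

end Congruence

/-- Let `S = A[ζ]` be integral over the local ring `A`. An `m`-th root `π` of an element of the
maximal ideal of `A` lies in `S` as soon as `π - l = π ^ 2 * c` for some `l` and `c` in `S`. -/
lemma Subalgebra.mem_of_pow_eq_of_sub_eq_sq_mul {A K : Type*} [CommRing A] [IsLocalRing A]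
    [Field K] [Algebra A K] {ζ π c l : K} (hζ : IsIntegral A ζ) {m : ℕ} (hm : m ≠ 0) {a : A}
    (ha : a ∈ IsLocalRing.maximalIdeal A) (hπ : π ^ m = algebraMap A K a)
    (hl : l ∈ Algebra.adjoin A {ζ}) (hc : c ∈ Algebra.adjoin A {ζ})
    (hπl : π - l = π ^ 2 * c) : π ∈ Algebra.adjoin A {ζ} := by
  set S := Algebra.adjoin A {ζ}
  set M := Algebra.adjoin A {ζ, π}
  have hSM : S ≤ M := Algebra.adjoin_mono (by simp)
  have hπM : π ∈ M := Algebra.subset_adjoin (by simp)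
  have hfg : (Subalgebra.toSubmodule M).FG := by
    refine fg_adjoin_of_finite (by simp) fun x hx ↦ ?_
    obtain rfl | rfl := hx
    · exact hζ
    · exact .of_pow (Nat.pos_of_ne_zero hm) (hπ ▸ isIntegral_algebraMap)
  have hone (x : K) (hx : x ∈ M) : ∃ s ∈ S, ∃ y ∈ M, x = s + π * y := by
    induction hx using Algebra.adjoin_induction with
    | mem x hx =>
      obtain rfl | rfl := hx
      · exact ⟨x, Algebra.subset_adjoin rfl, 0, M.zero_mem, by simp⟩
      · exact ⟨0, S.zero_mem, 1, M.one_mem, by simp⟩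
    | algebraMap r => exact ⟨_, S.algebraMap_mem r, 0, M.zero_mem, by simp⟩
    | add x y _ _ hx hy =>
      obtain ⟨s, hs, u, hu, rfl⟩ := hx
      obtain ⟨t, ht, v, hv, rfl⟩ := hy
      exact ⟨s + t, S.add_mem hs ht, u + v, M.add_mem hu hv, by ring⟩
    | mul x y _ _ hx hy =>
      obtain ⟨s, hs, u, hu, rfl⟩ := hx
      obtain ⟨t, ht, v, hv, rfl⟩ := hy
      exact ⟨s * t, S.mul_mem hs ht, s * v + u * t + π * u * v,
        M.add_mem (M.add_mem (M.mul_mem (hSM hs) hv) (M.mul_mem hu (hSM ht)))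
          (M.mul_mem (M.mul_mem hπM hu) hv), by ring⟩
  have hlpow (k : ℕ) : ∃ z ∈ M, π ^ k = l ^ k + π ^ (k + 1) * z := by
    induction k with
    | zero => exact ⟨0, M.zero_mem, by simp⟩
    | succ k ih =>
      obtain ⟨z, hz, h⟩ := ih
      refine ⟨c + z * (1 - π * c), M.add_mem (hSM hc)
        (M.mul_mem hz (M.sub_mem M.one_mem (M.mul_mem hπM (hSM hc)))), ?_⟩
      linear_combination l * h + (π ^ k - π ^ (k + 1) * z) * hπl
  have hpow (k : ℕ) (x : K) (hx : x ∈ M) : ∃ s ∈ S, ∃ y ∈ M, x = s + π ^ k * y := by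
    induction k with
    | zero => exact ⟨0, S.zero_mem, x, hx, by simp⟩
    | succ k ih =>
      obtain ⟨s, hs, y, hy, rfl⟩ := ih
      obtain ⟨t, ht, v, hv, rfl⟩ := hone y hy
      obtain ⟨z, hz, h⟩ := hlpow k
      refine ⟨s + l ^ k * t, S.add_mem hs (S.mul_mem (S.pow_mem hl k) ht), z * t + v,
        M.add_mem (M.mul_mem hz (hSM ht)) hv, ?_⟩
      linear_combination t * h
  have hle : Subalgebra.toSubmodule M ≤ Subalgebra.toSubmodule S := by
    refine Submodule.le_of_le_smul_of_le_jacobson_bot hfg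
      (IsLocalRing.maximalIdeal_le_jacobson ⊥) fun x hx ↦ ?_
    obtain ⟨s, hs, y, hy, rfl⟩ := hpow m x hx
    refine Submodule.add_mem_sup hs ?_
    rw [hπ, ← Algebra.smul_def]
    exact Submodule.smul_mem_smul ha hy
  exact hle hπM

lemma List.prod_map_eq_prod_range_getD {M : Type*} [CommMonoid M] (f : ℕ → M) (hf : f 0 = 1)
    (L : List ℕ) {n : ℕ} (hn : L.length ≤ n) :
    (L.map f).prod = ∏ i ∈ Finset.range n, f (L.getD i 0) := by
  induction L generalizing n with
  | nil => simp [hf]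
  | cons a L ih =>
    obtain ⟨n, rfl⟩ : ∃ m, n = m + 1 := Nat.exists_eq_succ_of_ne_zero (by rintro rfl; simp at hn)
    rw [Finset.prod_range_succ', List.map_cons, List.prod_cons, ih (by simpa using hn), mul_comm]
    simp

lemma Fintype.sum_eq_sum_units {F M : Type*} [Field F] [Fintype F] [Fintype Fˣ] [AddCommMonoid M]
    {f : F → M} (hf : f 0 = 0) : ∑ x, f x = ∑ x : Fˣ, f x := by
  refine (Fintype.sum_of_injective _ Units.val_injective _ _ (fun x hx ↦ ?_) fun _ ↦ rfl).symm
  obtain rfl : x = 0 := by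
    by_contra h
    exact hx ⟨Units.mk0 x h, rfl⟩
  exact hf

end

/-- Stickelberger's congruence: for `1 ≤ j < q - 1` with base-`p` digits `jᵢ`, the
Gauss sum `g(j) = τ(ω^{-j})` (where `ω` is the Teichmüller character, realized via the
embedding `ι` of the Witt vectors `𝕎(F_q)` into `K = ℚ_p(ξ,ζ)`) satisfies
`g(j) ≡ π^{wt_p(j)} / (j₀! ⋯ j_{n-1}!) (mod π^{wt_p(j)+1})`, i.e. multiplying
through by the unit `j₀! ⋯ j_{n-1}!`, the difference
`(∏ jᵢ!)·g(j) - π^{wt_p(j)}` lies in `π^{wt_p(j)+1}·O`, where `O` is the ring of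
integers of `K`, `π^{p-1} = -p` and `π ≡ ζ - 1 (mod π²)`. -/
theorem stickelberger_congruence (p : ℕ) [Fact p.Prime] (n : ℕ) (hn : 1 ≤ n)
    (F : Type*) [Field F] [Fintype F] [DecidableEq F] [CharP F p] [Algebra (ZMod p) F]
    (hcard : Fintype.card F = p ^ n)
    (K : Type*) [Field K]
    (ι : WittVector p F →+* K) (hι : Function.Injective ι)
    (ζ π : K) (hζ : IsPrimitiveRoot ζ p)
    (hπ : π ^ (p - 1) = -(p : K))
    (hπζ : ∃ c ∈ Subring.closure (Set.range ι ∪ {ζ}), π - (ζ - 1) = π ^ 2 * c)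
    (j : ℕ) (hj1 : 1 ≤ j) (hj2 : j < p ^ n - 1) :
    ∃ c ∈ Subring.closure (Set.range ι ∪ {ζ}),
      (∏ i ∈ Finset.range n, (((Nat.digits p j).getD i 0).factorial : K))
          * (- ∑ x : Fˣ, ι (WittVector.teichmuller p ((x⁻¹ : Fˣ) : F)) ^ j
                * ζ ^ (Algebra.trace (ZMod p) F x).val)
        - π ^ ((Nat.digits p j).sum)
      = π ^ ((Nat.digits p j).sum + 1) * c := by
  have hp := (Fact.out : p.Prime)
  let _ := ι.toAlgebra
  have hcl (x : K) : x ∈ Subring.closure (Set.range ι ∪ {ζ}) ↔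
      x ∈ Algebra.adjoin (WittVector p F) {ζ} := Algebra.mem_adjoin_iff.symm
  simp only [hcl] at hπζ ⊢
  set S := Algebra.adjoin (WittVector p F) {ζ}
  obtain ⟨c, hc, hπc⟩ := hπζ
  have hζS : ζ ∈ S := Algebra.subset_adjoin rfl
  have hζint : IsIntegral (WittVector p F) ζ :=
    .of_pow hp.pos (hζ.pow_eq_one ▸ isIntegral_one)
  have hpmem : -(p : WittVector p F) ∈ IsLocalRing.maximalIdeal (WittVector p F) := by
    rw [neg_mem_iff, IsLocalRing.mem_maximalIdeal]
    exact (WittVector.irreducible p).not_isUnit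
  have hπS : π ∈ S := Subalgebra.mem_of_pow_eq_of_sub_eq_sq_mul hζint
    (Nat.sub_ne_zero_of_lt hp.one_lt) hpmem (by simpa using hπ) (S.sub_mem hζS S.one_mem) hc hπc
  have hζpow : (⟨ζ, hζS⟩ : S) ^ p = 1 := Subtype.ext hζ.pow_eq_one
  have key := pow_succ_dvd_factorial_mul_gaussSum_sub (R := S) (ζ := ⟨ζ, hζS⟩) (π := ⟨π, hπS⟩)
    (F := F) (by omega) (algebraMap (WittVector p F) S)
    (fun x y h ↦ hι (congrArg Subtype.val h)) hζpow
    (fun h ↦ hζ.ne_one hp.one_lt (congrArg Subtype.val h)) (Subtype.ext (by simpa using hπ))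
    ⟨⟨c, hc⟩, Subtype.ext hπc⟩ j (by omega)
  obtain ⟨d, hd⟩ := key
  refine ⟨d, d.2, ?_⟩
  have hlen : (p.digits j).length ≤ n := (Nat.digits_length_le_iff hp.one_lt j).2 (by omega)
  have hsum : ((gaussSum ((WittVector.invTeichmullerChar p F ^ j).ringHomComp
      (algebraMap (WittVector p F) S)) (AddChar.ofTrace p F hζpow) : S) : K) =
      ∑ x : Fˣ, ι (WittVector.teichmuller p ((x⁻¹ : Fˣ) : F)) ^ j *
        ζ ^ (Algebra.trace (ZMod p) F x).val := by
    rw [gaussSum, Fintype.sum_eq_sum_units (by rw [MulChar.map_zero, zero_mul])]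
    push_cast
    refine Finset.sum_congr rfl fun x _ ↦ ?_
    simp only [MulChar.ringHomComp_apply, MulChar.pow_apply_coe, AddChar.ofTrace_apply,
      WittVector.invTeichmullerChar_apply, map_pow]
    rfl
  rw [← hsum, ← Nat.cast_prod, ← List.prod_map_eq_prod_range_getD _ Nat.factorial_zero _ hlen]
  simpa [-Nat.cast_list_prod] using congrArg Subtype.val hd
end

section
/- Let q = 2^n with n ≥ 3 and let g(1) = τ(ω^{-1}) be the Gauss sum of the inverse Teichmüller character over F_q. Then g(1) ≡ 6 (mod 16) and g(1)² ≡ 36 (mod 64), as congruences in the ring of integers of ℚ_2(ξ). -/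
/-- The sum of the `m`-th powers of the Teichmüller lifts of the units of a finite field. -/
theorem sum_teichmuller_units_pow {p : ℕ} [Fact p.Prime] (F : Type*) [Field F] [Fintype F]
    [DecidableEq F] [CharP F p] (m : ℕ) :
    ∑ x : Fˣ, WittVector.teichmuller p (x : F) ^ m =
      if Fintype.card F - 1 ∣ m then (Fintype.card Fˣ : WittVector p F) else 0 := by
  classical
  let φ : Fˣ →* WittVector p F :=
    (powMonoidHom m).comp ((WittVector.teichmuller p).comp (Units.coeHom F))
  have hφ : φ = 1 ↔ Fintype.card F - 1 ∣ m := by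
    rw [← FiniteField.forall_pow_eq_one_iff F m, DFunLike.ext_iff]
    refine forall_congr' fun x => ?_
    have hx : φ x = WittVector.teichmuller p ((x : F) ^ m) := by simp [φ]
    rw [hx, MonoidHom.one_apply, Units.ext_iff, Units.val_pow_eq_pow_val, Units.val_one]
    refine ⟨fun h => ?_, fun h => by rw [h, map_one]⟩
    simpa only [WittVector.teichmuller_coeff_zero, WittVector.one_coeff_zero] using
      congrArg (fun w => WittVector.coeff w 0) h
  have h := sum_hom_units φ
  simp only [hφ] at h
  rw [← Nat.cast_zero, ← Nat.cast_ite, ← h]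
  rfl

/-- A Witt vector fixed by Frobenius is idempotent modulo `p = 2`. -/
theorem two_dvd_sq_sub_self_of_frobenius_eq {F : Type*} [Field F] [CharP F 2] [PerfectRing F 2]
    {w : WittVector 2 F} (hw : WittVector.frobenius w = w) : (2 : WittVector 2 F) ∣ w ^ 2 - w := by
  have h0 : w.coeff 0 ^ 2 = w.coeff 0 := by
    rw [← WittVector.coeff_frobenius_charP, hw]
  have h := (WittVector.mem_span_p_iff_coeff_zero_eq_zero (p := 2) (w ^ 2 - w)).2 (by
    change WittVector.constantCoeff (w ^ 2 - w) = 0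
    rw [map_sub, map_pow]
    exact sub_eq_zero.2 h0)
  simpa [Ideal.mem_span_singleton] using h

/-- A cubic expression modulo `16` for three times the sign attached to a Frobenius-fixed Witt
vector. -/
theorem sixteen_dvd_three_mul_neg_one_pow_sub {F : Type*} [Field F] [CharP F 2] [PerfectRing F 2]
    {s : WittVector 2 F} (hs : WittVector.frobenius s = s) {e : ℕ} (he : e < 2)
    (h0 : s.coeff 0 = (e : F)) :
    (16 : WittVector 2 F) ∣ 3 * (-1) ^ e - (3 - 4 * s + 2 * s ^ 2 - 4 * s ^ 3) := by
  have h := (WittVector.mem_span_p_iff_coeff_zero_eq_zero (p := 2) (s - (e : WittVector 2 F))).2 (by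
    change WittVector.constantCoeff (s - (e : WittVector 2 F)) = 0
    rw [map_sub, map_natCast]
    exact sub_eq_zero.2 h0)
  rw [Ideal.mem_span_singleton, Nat.cast_ofNat] at h
  obtain ⟨w, hw⟩ := h
  have h2 : (2 : WittVector 2 F) ≠ 0 := by
    simpa using WittVector.p_nonzero 2 F
  have hwf : WittVector.frobenius w = w := by
    have := congrArg WittVector.frobenius hw
    rw [map_sub, map_mul, map_natCast, map_ofNat, hs, hw] at this
    exact (mul_left_cancel₀ h2 this).symm
  obtain ⟨v, hv⟩ := two_dvd_sq_sub_self_of_frobenius_eq hwf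
  have hs' : s = e + 2 * w := by rw [← hw]; ring
  interval_cases e
  · refine ⟨-v + 2 * w ^ 3, ?_⟩
    subst hs'
    push_cast
    linear_combination (-8) * hv
  · refine ⟨-v + w + 3 * w ^ 2 + 2 * w ^ 3, ?_⟩
    subst hs'
    push_cast
    linear_combination (-8) * hv

theorem pred_dvd_add_pred_pred_iff {q s : ℕ} (hq : 3 ≤ q) (hs : 1 ≤ s) (hs' : s < 2 * q - 1) :
    q - 1 ∣ s + (q - 2) ↔ s = 1 ∨ s = q := by
  obtain ⟨r, rfl⟩ : ∃ r, q = r + 3 := ⟨q - 3, by omega⟩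
  constructor
  · rintro ⟨c, hc⟩
    have h3 : c < 3 := by
      by_contra! h
      have := Nat.mul_le_mul_left (r + 3 - 1) h
      omega
    interval_cases c <;> omega
  · rintro (rfl | rfl)
    · exact ⟨1, by omega⟩
    · exact ⟨2, by omega⟩

theorem two_pow_cases {m i : ℕ} (hi : i < m + 3) :
    (i = m + 2 ∧ 2 ^ i = 4 * 2 ^ m) ∨ (i = m + 1 ∧ 2 ^ i = 2 * 2 ^ m) ∨
      (i ≤ m ∧ 1 ≤ 2 ^ i ∧ 2 ^ i ≤ 2 ^ m) := by
  rcases (by omega : i = m + 2 ∨ i = m + 1 ∨ i ≤ m) with rfl | rfl | h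
  · exact .inl ⟨rfl, by ring⟩
  · exact .inr (.inl ⟨rfl, by ring⟩)
  · exact .inr (.inr ⟨h, Nat.one_le_two_pow, Nat.pow_le_pow_right (by norm_num) h⟩)

section

variable {R : Type*} [CommRing R] (c : R) (m : ℕ)

open Finset

theorem sum_ite_two_pow_dvd :
    ∑ i ∈ range (m + 3), (if 2 ^ (m + 3) - 1 ∣ 2 ^ i + (2 ^ (m + 3) - 2) then c else 0) = c := by
  have hq : 2 ^ (m + 3) = 8 * 2 ^ m := by ring
  have hpos : 1 ≤ 2 ^ m := Nat.one_le_two_pow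
  rw [sum_eq_single_of_mem 0 (by simp)]
  · rw [if_pos ((pred_dvd_add_pred_pred_iff (by omega) (by simp) (by simp; omega)).2 (by simp))]
  · intro i hi h0
    have h2 : 2 ≤ 2 ^ i := Nat.le_self_pow h0 2
    rw [if_neg]
    have := two_pow_cases (mem_range.1 hi)
    rw [pred_dvd_add_pred_pred_iff (by omega) (by omega) (by omega)]
    omega

theorem sum_ite_two_pow_add_two_pow_dvd :
    ∑ i ∈ range (m + 3), ∑ j ∈ range (m + 3),
      (if 2 ^ (m + 3) - 1 ∣ 2 ^ i + 2 ^ j + (2 ^ (m + 3) - 2) then c else 0) = c := by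
  have hq : 2 ^ (m + 3) = 8 * 2 ^ m := by ring
  have hpos : 1 ≤ 2 ^ m := Nat.one_le_two_pow
  rw [← sum_product', ← sum_filter, sum_const]
  have : {x ∈ range (m + 3) ×ˢ range (m + 3) |
      2 ^ (m + 3) - 1 ∣ 2 ^ x.1 + 2 ^ x.2 + (2 ^ (m + 3) - 2)} = {(m + 2, m + 2)} := by
    ext ⟨i, j⟩
    simp only [mem_filter, mem_product, mem_range, mem_singleton, Prod.mk.injEq]
    refine ⟨fun ⟨⟨hi, hj⟩, h⟩ => ?_, ?_⟩
    · have hi' := two_pow_cases hi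
      have hj' := two_pow_cases hj
      rw [pred_dvd_add_pred_pred_iff (by omega) (by omega) (by omega)] at h
      omega
    · rintro ⟨rfl, rfl⟩
      have h2 : 2 ^ (m + 2) = 4 * 2 ^ m := by ring
      rw [pred_dvd_add_pred_pred_iff (by omega) (by omega) (by omega)]
      omega
  rw [this, card_singleton, one_smul]

theorem sum_ite_two_pow_add_two_pow_add_two_pow_dvd :
    ∑ i ∈ range (m + 3), ∑ j ∈ range (m + 3), ∑ k ∈ range (m + 3),
      (if 2 ^ (m + 3) - 1 ∣ 2 ^ i + 2 ^ j + 2 ^ k + (2 ^ (m + 3) - 2) then c else 0) = 3 * c := by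
  have hq : 2 ^ (m + 3) = 8 * 2 ^ m := by ring
  have hpos : 1 ≤ 2 ^ m := Nat.one_le_two_pow
  simp_rw [← sum_product', ← sum_filter]
  rw [sum_const]
  have : {x ∈ range (m + 3) ×ˢ range (m + 3) ×ˢ range (m + 3) |
      2 ^ (m + 3) - 1 ∣ 2 ^ x.1 + 2 ^ x.2.1 + 2 ^ x.2.2 + (2 ^ (m + 3) - 2)} =
      {(m + 2, m + 1, m + 1), (m + 1, m + 2, m + 1), (m + 1, m + 1, m + 2)} := by
    ext ⟨i, j, k⟩
    simp only [mem_filter, mem_product, mem_range, mem_insert, mem_singleton, Prod.mk.injEq]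
    have h1 : 2 ^ (m + 1) = 2 * 2 ^ m := by ring
    have h2 : 2 ^ (m + 2) = 4 * 2 ^ m := by ring
    refine ⟨fun ⟨⟨hi, hj, hk⟩, h⟩ => ?_, ?_⟩
    · have hi' := two_pow_cases hi
      have hj' := two_pow_cases hj
      have hk' := two_pow_cases hk
      rw [pred_dvd_add_pred_pred_iff (by omega) (by omega) (by omega)] at h
      omega
    · rintro (⟨rfl, rfl, rfl⟩ | ⟨rfl, rfl, rfl⟩ | ⟨rfl, rfl, rfl⟩) <;>
      · rw [pred_dvd_add_pred_pred_iff (by omega) (by omega) (by omega)]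
        omega
  rw [this, card_eq_three.2 ⟨_, _, _, by simp, by simp, by simp, rfl⟩, nsmul_eq_mul, Nat.cast_ofNat]

end

section

variable {m : ℕ} {F : Type*} [Field F] [Fintype F]

open Finset

theorem frobenius_sum_teichmuller_pow [CharP F 2] (hcard : Fintype.card F = 2 ^ (m + 3)) (x : F) :
    WittVector.frobenius (∑ i ∈ range (m + 3), WittVector.teichmuller 2 x ^ 2 ^ i) =
      ∑ i ∈ range (m + 3), WittVector.teichmuller 2 x ^ 2 ^ i := by
  have h : WittVector.teichmuller 2 x ^ 2 ^ (m + 3) = WittVector.teichmuller 2 x := by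
    rw [← map_pow, ← hcard, FiniteField.pow_card]
  have hf : WittVector.frobenius (WittVector.teichmuller 2 x) = WittVector.teichmuller 2 x ^ 2 := by
    rw [WittVector.frobenius_eq_map_frobenius, WittVector.map_teichmuller, frobenius_def, map_pow]
  rw [map_sum]
  simp_rw [map_pow, hf, ← pow_mul, ← pow_succ']
  rw [sum_range_succ, sum_range_succ' _ (m + 2), h, pow_zero, pow_one]

theorem coeff_zero_sum_teichmuller_pow [Algebra (ZMod 2) F]
    (hcard : Fintype.card F = 2 ^ (m + 3)) (x : F) :
    (∑ i ∈ range (m + 3), WittVector.teichmuller 2 x ^ 2 ^ i).coeff 0 =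
      ((Algebra.trace (ZMod 2) F x).val : F) := by
  have hr : Module.finrank (ZMod 2) F = m + 3 := by
    have := Module.card_eq_pow_finrank (K := ZMod 2) (V := F)
    rw [hcard, ZMod.card] at this
    exact (Nat.pow_right_injective le_rfl this).symm
  have ht := FiniteField.algebraMap_trace_eq_sum_pow (ZMod 2) F x
  rw [hr, Nat.card_zmod] at ht
  rw [← map_natCast (algebraMap (ZMod 2) F), ZMod.natCast_zmod_val, ht]
  change WittVector.constantCoeff _ = _
  rw [map_sum]
  refine sum_congr rfl fun i _ => ?_
  rw [map_pow]
  exact congrArg (· ^ 2 ^ i) (WittVector.teichmuller_coeff_zero 2 x)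

theorem sum_teichmuller_mul_cubic [CharP F 2] [DecidableEq F]
    (hcard : Fintype.card F = 2 ^ (m + 3))
    (S : Fˣ → WittVector 2 F)
    (hS : ∀ x, S x = ∑ i ∈ range (m + 3), WittVector.teichmuller 2 (x : F) ^ 2 ^ i) :
    ∑ x : Fˣ, WittVector.teichmuller 2 ((x⁻¹ : Fˣ) : F) *
      (3 - 4 * S x + 2 * S x ^ 2 - 4 * S x ^ 3) = -14 * (2 ^ (m + 3) - 1) := by
  have hq : 2 ^ (m + 3) = 8 * 2 ^ m := by ring
  have hpos : 1 ≤ 2 ^ m := Nat.one_le_two_pow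
  have hu : (Fintype.card Fˣ : WittVector 2 F) = 2 ^ (m + 3) - 1 := by
    rw [Fintype.card_units, hcard, Nat.cast_sub Nat.one_le_two_pow]
    simp
  have hsum := sum_teichmuller_units_pow (p := 2) F
  rw [hcard, hu] at hsum
  have hinv (x : Fˣ) : WittVector.teichmuller 2 ((x⁻¹ : Fˣ) : F) =
      WittVector.teichmuller 2 (x : F) ^ (2 ^ (m + 3) - 2) := by
    rw [← map_pow, ← Units.val_pow_eq_pow_val]
    congr 2
    rw [inv_eq_iff_mul_eq_one, ← pow_succ', ← pow_card_eq_one (x := x), Fintype.card_units, hcard]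
    congr 1
    omega
  have e0 : ∑ x : Fˣ, WittVector.teichmuller 2 ((x⁻¹ : Fˣ) : F) = 0 := by
    simp_rw [hinv, hsum]
    rw [if_neg]
    exact Nat.not_dvd_of_pos_of_lt (by omega) (by omega)
  have e1 : ∑ x : Fˣ, WittVector.teichmuller 2 ((x⁻¹ : Fˣ) : F) * S x = 2 ^ (m + 3) - 1 := by
    simp_rw [hinv, hS, mul_comm (_ ^ (_ - 2)), sum_mul, ← pow_add]
    rw [sum_comm]
    simp_rw [hsum]
    exact sum_ite_two_pow_dvd _ m
  have e2 : ∑ x : Fˣ, WittVector.teichmuller 2 ((x⁻¹ : Fˣ) : F) * S x ^ 2 = 2 ^ (m + 3) - 1 := by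
    simp_rw [hinv, hS, mul_comm (_ ^ (_ - 2)), sq, sum_mul_sum, sum_mul, ← pow_add]
    rw [sum_comm]
    simp_rw [sum_comm (s := univ), hsum]
    exact sum_ite_two_pow_add_two_pow_dvd _ m
  have e3 : ∑ x : Fˣ, WittVector.teichmuller 2 ((x⁻¹ : Fˣ) : F) * S x ^ 3 =
      3 * (2 ^ (m + 3) - 1) := by
    simp_rw [hinv, hS, mul_comm (_ ^ (_ - 2)), pow_three', sum_mul_sum, sum_mul, ← pow_add]
    rw [sum_comm]
    simp_rw [sum_comm (s := univ), hsum]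
    exact (sum_congr rfl fun _ _ => sum_comm).trans
      (sum_ite_two_pow_add_two_pow_add_two_pow_dvd _ m)
  calc _ = 3 * ∑ x : Fˣ, WittVector.teichmuller 2 ((x⁻¹ : Fˣ) : F) -
        4 * ∑ x : Fˣ, WittVector.teichmuller 2 ((x⁻¹ : Fˣ) : F) * S x +
        2 * ∑ x : Fˣ, WittVector.teichmuller 2 ((x⁻¹ : Fˣ) : F) * S x ^ 2 -
        4 * ∑ x : Fˣ, WittVector.teichmuller 2 ((x⁻¹ : Fˣ) : F) * S x ^ 3 := by
        simp_rw [mul_sum, ← sum_sub_distrib, ← sum_add_distrib, ← sum_sub_distrib]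
        exact sum_congr rfl fun x _ => by ring
    _ = _ := by
        rw [e0, e1, e2, e3]
        ring

end

/-- For `q = 2^n`, `n ≥ 3`, the Gauss sum `g(1) = τ(ω^{-1})` in the ring of integers
`𝕎(F_q)` of `ℚ₂(ξ)` satisfies `g(1) ≡ 6 (mod 16)` and `g(1)² ≡ 36 (mod 64)`. -/
theorem gauss_sum_one_mod_sixteen (n : ℕ) (hn : 3 ≤ n)
    (F : Type*) [Field F] [Fintype F] [DecidableEq F] [CharP F 2] [Algebra (ZMod 2) F]
    (hcard : Fintype.card F = 2 ^ n)
    (g : WittVector 2 F)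
    (hg : g = - ∑ x : Fˣ, WittVector.teichmuller 2 ((x⁻¹ : Fˣ) : F)
          * (-1) ^ (Algebra.trace (ZMod 2) F x).val) :
    (16 : WittVector 2 F) ∣ g - 6 ∧ (64 : WittVector 2 F) ∣ g ^ 2 - 36 := by
  obtain ⟨m, rfl⟩ : ∃ m, n = m + 3 := ⟨n - 3, by omega⟩
  have h16 : (16 : WittVector 2 F) ∣ g - 6 := by
    have hdvd := Finset.dvd_sum (s := Finset.univ) fun (x : Fˣ) _ =>
      (sixteen_dvd_three_mul_neg_one_pow_sub (frobenius_sum_teichmuller_pow hcard (x : F))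
        (ZMod.val_lt _) (coeff_zero_sum_teichmuller_pow hcard (x : F))).mul_left
        (WittVector.teichmuller 2 ((x⁻¹ : Fˣ) : F))
    rw [Finset.sum_congr rfl fun x _ => mul_sub _ _ _, Finset.sum_sub_distrib,
      sum_teichmuller_mul_cubic hcard _ fun _ => rfl] at hdvd
    simp_rw [mul_left_comm _ (3 : WittVector 2 F)] at hdvd
    rw [← Finset.mul_sum, ← neg_eq_iff_eq_neg.2 hg] at hdvd
    obtain ⟨c, hc⟩ := hdvd
    exact ⟨-11 * c + 77 * 2 ^ m - 2 * g - 10, by linear_combination (-11) * hc⟩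
  obtain ⟨c, hc⟩ := h16
  refine ⟨⟨c, hc⟩, 3 * c + 4 * c ^ 2, ?_⟩
  rw [sub_eq_iff_eq_add.1 hc]
  ring
end
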